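/- Let k, m, s be positive integers with s ≥ 2. If z is a nonzero element of R(k,m)^{⊗s}, then the element z' · z_{s+1,1}^{m+k−1} · z_{s+1,2}^{m+k−2} · … · z_{s+1,k}^m of R(k,m)^{⊗(s+1)} is nonzero, where z' denotes the image of z under the natural inclusion of R(k,m)^{⊗s} into the first s tensor factors of R(k,m)^{⊗(s+1)} (i.e., z ⊗ 1). -/

import Mathlib

/-!
Put `N = m + k - 1`, let `V` be the Vandermonde product `∏_{i<j} (x_j - x_i)`, and let `φ` be the
linear functional taking a polynomial `p` to the coefficient of `∏_j x_j^N` in `p * V`. The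
identity `(a - b) h_d(a, b, L) = h_{d+1}(a, L) - h_{d+1}(b, L)` shows inductively that
`h_{N+2-l}(x_1, …, x_l) * V(x_1, …, x_l)` lies in the ideal `(x_1^(N+1), …, x_l^(N+1))`, none of
whose members has `∏_j x_j^N` in its support. Hence `φ` descends to `R(k,m)`.

Index the variables from `0` and put `e_j = N - j`. In the Leibniz expansion of `V` every monomial
is `∏_j x_j^(σ j)` for a permutation `σ`, and only `σ = 1` satisfies `j ≤ σ j` for all `j`. Hence
`φ(x^e) = 1` and `φ(x^b) = 0` for every other `b ≤ e`. Applied to the last tensor factor, `φ`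
therefore kills every term of the expansion of `(z ⊗ 1) * ∏_j (x_{1,j} ⊗ 1 + 1 ⊗ x_j)^(e_j)` except
`z ⊗ x^e`, which it sends to `z`.
-/

set_option synthInstance.maxHeartbeats 1000000
set_option maxHeartbeats 1000000

open scoped TensorProduct

/-- Complete homogeneous symmetric polynomial of degree `d` in a list of elements
of a commutative (semi)ring: `h_d(l)`. -/
noncomputable def completeHomog {R : Type*} [CommSemiring R] : List R → ℕ → R
  | [], 0 => 1
  | [], _ + 1 => 0
  | x :: l, d => ∑ t ∈ Finset.range (d + 1), x ^ t * completeHomog l (d - t)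

/-- Elementary symmetric polynomial of degree `d` in a list of elements: `e_d(l)`. -/
noncomputable def elemSymm {R : Type*} [CommSemiring R] : List R → ℕ → R
  | _, 0 => 1
  | [], _ + 1 => 0
  | x :: l, d + 1 => elemSymm l (d + 1) + x * elemSymm l d

/-- The ideal of `(ZMod 2)[x_1, …, x_k]` generated by the complete homogeneous
symmetric polynomials `h_{m+i}(x_1, …, x_{k+1-i})` for `1 ≤ i ≤ k`. -/
noncomputable def flagIdeal (k m : ℕ) : Ideal (MvPolynomial (Fin k) (ZMod 2)) :=
  Ideal.span { p | ∃ i : ℕ, 1 ≤ i ∧ i ≤ k ∧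
    p = completeHomog (((List.finRange k).take (k + 1 - i)).map MvPolynomial.X) (m + i) }

/-- `R(k,m)`, the quotient of `(ZMod 2)[x_1, …, x_k]` by `flagIdeal k m`;
this is the mod-2 cohomology ring of the real flag manifold `F(1^k, m)`. -/
abbrev FlagRing (k m : ℕ) : Type :=
  MvPolynomial (Fin k) (ZMod 2) ⧸ flagIdeal k m

/-- The image of the variable `x_{j+1}` in `R(k,m)` (`j` is 0-indexed). -/
noncomputable def xGen (k m : ℕ) (j : Fin k) : FlagRing k m :=
  Ideal.Quotient.mk (flagIdeal k m) (MvPolynomial.X j)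

/-- The zero-divisor `z_{j+1} = x_{j+1} ⊗ 1 + 1 ⊗ x_{j+1}` in `R(k,m) ⊗ R(k,m)`. -/
noncomputable def zGen (k m : ℕ) (j : Fin k) :
    FlagRing k m ⊗[ZMod 2] FlagRing k m :=
  xGen k m j ⊗ₜ 1 + 1 ⊗ₜ xGen k m j

/-- `x_{i+1,j+1}` in the `s`-fold tensor power `R(k,m)^{⊗ s}`: the element having
`x_{j+1}` in the `(i+1)`-st tensor factor and `1` elsewhere (`i`, `j` 0-indexed). -/
noncomputable def xT (k m s : ℕ) (i : Fin s) (j : Fin k) :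
    ⨂[ZMod 2] _ : Fin s, FlagRing k m :=
  PiTensorProduct.tprod (ZMod 2) (fun t => if t = i then xGen k m j else 1)

/-- The `s`-th zero-divisor `z_{i+1,j+1} = x_{1,j+1} + x_{i+1,j+1}` in `R(k,m)^{⊗ s}`. -/
noncomputable def zT (k m s : ℕ) (hs : 0 < s) (i : Fin s) (j : Fin k) :
    ⨂[ZMod 2] _ : Fin s, FlagRing k m :=
  xT k m s ⟨0, hs⟩ j + xT k m s i j

/-- The ring structure on `R(k,m)^{⊗s} ⊗ R(k,m)` (this is the instance provided by
`Algebra.TensorProduct.instCommRing`, registered here so that instance search finds it). -/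
noncomputable instance (k m s : ℕ) :
    CommRing ((⨂[ZMod 2] _ : Fin s, FlagRing k m) ⊗[ZMod 2] FlagRing k m) :=
  Algebra.TensorProduct.instCommRing (R := ZMod 2)
    (A := ⨂[ZMod 2] _ : Fin s, FlagRing k m) (B := FlagRing k m)

section CompleteHomog

variable {R : Type*} [CommSemiring R]

lemma completeHomog_zero (l : List R) : completeHomog l 0 = 1 := by
  induction l with
  | nil => rfl
  | cons a l ih => simp [completeHomog, ih]

lemma completeHomog_cons_succ (a : R) (l : List R) (d : ℕ) :
    completeHomog (a :: l) (d + 1) = completeHomog l (d + 1) + a * completeHomog (a :: l) d := by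
  rw [completeHomog, completeHomog, Finset.sum_range_succ', Finset.mul_sum, add_comm]
  simp only [pow_zero, one_mul, Nat.sub_zero, Nat.add_sub_add_right, pow_succ', mul_assoc]

lemma completeHomog_singleton (a : R) (d : ℕ) : completeHomog [a] d = a ^ d := by
  induction d with
  | zero => rw [completeHomog_zero, pow_zero]
  | succ d ih => rw [completeHomog_cons_succ, ih, completeHomog, zero_add, pow_succ']

end CompleteHomog

section Vandermonde

variable {R : Type*} [CommRing R]

lemma sub_mul_completeHomog_cons_cons (a b : R) (l : List R) (d : ℕ) :
    (a - b) * completeHomog (a :: b :: l) d =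
      completeHomog (a :: l) (d + 1) - completeHomog (b :: l) (d + 1) := by
  induction d with
  | zero =>
    simp only [completeHomog_cons_succ, completeHomog_zero]
    ring
  | succ d ih =>
    rw [completeHomog_cons_succ a (b :: l) d, completeHomog_cons_succ a l (d + 1),
      completeHomog_cons_succ b l (d + 1)]
    linear_combination a * ih

/-- The Vandermonde product `∏_{i<j} (x_j - x_i)` of a list `[x_0, x_1, …]`. It is defined on lists,
like `completeHomog`, so that both can be restricted to an initial segment of the variables. -/
def listVandermonde : List R → R
  | [] => 1
  | a :: l => (l.map (· - a)).prod * listVandermonde l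

lemma listVandermonde_ofFn {n : ℕ} (v : Fin n → R) :
    listVandermonde (List.ofFn v) = (Matrix.vandermonde v).det := by
  rw [Matrix.det_vandermonde]
  induction n with
  | zero => simp [listVandermonde]
  | succ n ih =>
    simp only [List.ofFn_succ, listVandermonde, ih, Fin.prod_univ_succ, Fin.prod_Ioi_zero,
      Fin.prod_Ioi_succ, List.map_ofFn, List.prod_ofFn, Function.comp_apply]

lemma listVandermonde_dvd_append (l l' : List R) :
    listVandermonde l ∣ listVandermonde (l ++ l') := by
  induction l with
  | nil => exact one_dvd _
  | cons a l ih =>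
    simp only [List.cons_append, listVandermonde, List.map_append, List.prod_append]
    exact mul_dvd_mul (dvd_mul_right _ _) ih

lemma completeHomog_mul_listVandermonde_cons_cons (a b : R) (l : List R) (d : ℕ) :
    completeHomog (a :: b :: l) d * listVandermonde (a :: b :: l) =
      (l.map (· - a)).prod * (completeHomog (b :: l) (d + 1) * listVandermonde (b :: l)) -
      (l.map (· - b)).prod * (completeHomog (a :: l) (d + 1) * listVandermonde (a :: l)) := by
  simp only [listVandermonde, List.map_cons, List.prod_cons]
  linear_combination (-(l.map (· - a)).prod * (l.map (· - b)).prod * listVandermonde l) *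
    sub_mul_completeHomog_cons_cons a b l d

/-- True because the Vandermonde product clears the denominators in
`h_d(x_1, …, x_l) = ∑_i x_i^(d+l-1) / ∏_{j≠i} (x_i - x_j)`. -/
lemma completeHomog_mul_listVandermonde_mem {J : Ideal R} {n : ℕ} :
    ∀ {l : List R} {d : ℕ}, d + l.length = n + 1 → (∀ a ∈ l, a ^ n ∈ J) →
      completeHomog l d * listVandermonde l ∈ J
  | [], d, hd, _ => by
    obtain rfl : d = n + 1 := hd
    simp [completeHomog]
  | [a], d, hd, hJ => by
    obtain rfl : d = n := Nat.succ_injective hd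
    rw [completeHomog_singleton]
    exact J.mul_mem_right _ (hJ a (List.mem_singleton_self a))
  | a :: b :: l, d, hd, hJ => by
    simp only [List.length_cons, List.forall_mem_cons] at hd hJ
    obtain ⟨ha, hb, hl⟩ := hJ
    have mem_a : completeHomog (a :: l) (d + 1) * listVandermonde (a :: l) ∈ J :=
      completeHomog_mul_listVandermonde_mem (by rw [List.length_cons]; omega)
        (List.forall_mem_cons.2 ⟨ha, hl⟩)
    have mem_b : completeHomog (b :: l) (d + 1) * listVandermonde (b :: l) ∈ J :=
      completeHomog_mul_listVandermonde_mem (by rw [List.length_cons]; omega)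
        (List.forall_mem_cons.2 ⟨hb, hl⟩)
    rw [completeHomog_mul_listVandermonde_cons_cons]
    exact J.sub_mem (J.mul_mem_left _ mem_b) (J.mul_mem_left _ mem_a)
termination_by l => l.length

end Vandermonde

lemma perm_eq_one_of_forall_le {α : Type*} [PartialOrder α] [Finite α] {σ : Equiv.Perm α}
    (h : ∀ a, a ≤ σ a) : σ = 1 := by
  refine Equiv.ext fun a => le_antisymm ?_ (h a)
  have orbit_mono : Monotone fun n : ℕ => (σ ^ n) a :=
    monotone_nat_of_le_succ fun n => by
      rw [pow_succ', Equiv.Perm.mul_apply]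
      exact h _
  simpa [pow_orderOf_eq_one] using orbit_mono (Nat.succ_le_of_lt (orderOf_pos σ))

section Coefficients

open MvPolynomial

lemma coeff_eq_zero_of_mem_span_X_pow {σ R : Type*} [CommSemiring R] {n : ℕ}
    {p : MvPolynomial σ R} (hp : p ∈ Ideal.span (Set.range fun i => (X i : MvPolynomial σ R) ^ n))
    {c : σ →₀ ℕ} (hc : ∀ i, c i < n) : coeff c p = 0 := by
  have range_eq : (Set.range fun i => (X i : MvPolynomial σ R) ^ n) =
      (fun s => monomial s 1) '' Set.range fun i => Finsupp.single i n := by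
    rw [← Set.range_comp]
    simp only [X_pow_eq_monomial, Function.comp_def]
  rw [range_eq, mem_ideal_span_monomial_image] at hp
  by_contra hcp
  obtain ⟨_, ⟨i, rfl⟩, hi⟩ := hp c (mem_support_iff.2 hcp)
  exact (hc i).not_ge (by simpa using hi i)

variable {R : Type*} [CommRing R]

lemma coeff_det_vandermonde_X {k : ℕ} {c : Fin k →₀ ℕ} (hc : ∀ j : Fin k, (j : ℕ) ≤ c j) :
    coeff c (Matrix.vandermonde (X : Fin k → MvPolynomial (Fin k) R)).det =
      if ∀ j, c j = j then 1 else 0 := by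
  have coeff_term (σ : Equiv.Perm (Fin k)) :
      coeff c (∏ j, (X j : MvPolynomial (Fin k) R) ^ (σ j : ℕ)) =
        if ∀ j, c j = σ j then 1 else 0 := by
    simp [coeff_prod_X_pow, Finsupp.ext_iff]
  rw [← Matrix.det_transpose, Matrix.det_apply, coeff_sum, Finset.sum_eq_single 1]
  · simp only [Equiv.Perm.sign_one, one_smul, Matrix.transpose_apply, Matrix.vandermonde_apply]
    exact coeff_term 1
  · intro σ _ hσ
    have not_exponent : ¬ ∀ j, c j = σ j := fun h =>
      hσ (perm_eq_one_of_forall_le fun j => Fin.le_def.2 ((hc j).trans (h j).le))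
    simp only [Matrix.transpose_apply, Matrix.vandermonde_apply, Units.smul_def, coeff_smul,
      coeff_term, if_neg not_exponent, smul_zero]
  · exact fun h => absurd (Finset.mem_univ _) h

/-- The linear functional sending `p` to the coefficient of `∏_j x_j^N` in
`p * ∏_{i<j} (x_j - x_i)`. -/
noncomputable def vandermondeCoeff (R : Type*) [CommRing R] (k N : ℕ) :
    MvPolynomial (Fin k) R →ₗ[R] R :=
  lcoeff R (Finsupp.indicator Finset.univ fun _ _ => N) ∘ₗ
    LinearMap.mulRight R (Matrix.vandermonde X).det

lemma vandermondeCoeff_apply (k N : ℕ) (p : MvPolynomial (Fin k) R) :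
    vandermondeCoeff R k N p =
      coeff (Finsupp.indicator Finset.univ fun _ _ => N) (p * (Matrix.vandermonde X).det) :=
  rfl

lemma vandermondeCoeff_prod_X_pow {k N : ℕ} {b : Fin k → ℕ} (hb : ∀ j : Fin k, b j + j ≤ N) :
    vandermondeCoeff R k N (∏ j, X j ^ b j) = if ∀ j, b j + j = N then 1 else 0 := by
  set top : Fin k →₀ ℕ := Finsupp.indicator Finset.univ fun _ _ => N with htop
  set β : Fin k →₀ ℕ := Finsupp.indicator Finset.univ fun j _ => b j with hβ
  have β_le_top : β ≤ top := fun j => by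
    simpa [htop, hβ] using (Nat.le_add_right _ _).trans (hb j)
  have top_sub_β (j : Fin k) : (top - β) j = N - b j := by simp [htop, hβ]
  have le_top_sub_β (j : Fin k) : (j : ℕ) ≤ (top - β) j := by
    rw [top_sub_β]
    exact Nat.le_sub_of_add_le' (hb j)
  rw [vandermondeCoeff_apply, prod_X_pow, coeff_monomial_mul', if_pos β_le_top, one_mul,
    coeff_det_vandermonde_X le_top_sub_β]
  refine if_congr (forall_congr' fun j => ?_) rfl rfl
  rw [top_sub_β]
  have := hb j
  omega

end Coefficients

section FlagRing

open MvPolynomial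

lemma mul_det_vandermonde_mem_span_X_pow {k m : ℕ} {p : MvPolynomial (Fin k) (ZMod 2)}
    (hp : p ∈ flagIdeal k m) :
    p * (Matrix.vandermonde X).det ∈
      Ideal.span (Set.range fun j : Fin k => (X j : MvPolynomial (Fin k) (ZMod 2)) ^ (m + k)) := by
  set J := Ideal.span
    (Set.range fun j : Fin k => (X j : MvPolynomial (Fin k) (ZMod 2)) ^ (m + k))
  suffices flagIdeal k m ≤ J.colon {(Matrix.vandermonde X).det} from
    Submodule.mem_colon_singleton.1 (this hp)
  refine Ideal.span_le.2 ?_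
  rintro _ ⟨i, hi, hik, rfl⟩
  set l : List (MvPolynomial (Fin k) (ZMod 2)) := ((List.finRange k).take (k + 1 - i)).map X
    with hl
  have dvd_det : listVandermonde l ∣ (Matrix.vandermonde X).det := by
    have := listVandermonde_dvd_append l (((List.finRange k).drop (k + 1 - i)).map X)
    rwa [hl, ← List.map_append, List.take_append_drop, ← List.ofFn_eq_map,
      listVandermonde_ofFn] at this
  have length_l : m + i + l.length = m + k + 1 := by
    simp only [hl, List.length_map, List.length_take, List.length_finRange]
    omega
  have pow_mem : ∀ a ∈ l, a ^ (m + k) ∈ J := by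
    intro a ha
    obtain ⟨j, -, rfl⟩ := List.mem_map.1 ha
    exact Ideal.subset_span ⟨j, rfl⟩
  exact Submodule.mem_colon_singleton.2 (J.mem_of_dvd (mul_dvd_mul_left _ dvd_det)
    (completeHomog_mul_listVandermonde_mem length_l pow_mem))

lemma vandermondeCoeff_eq_zero_of_mem_flagIdeal {k m : ℕ} {p : MvPolynomial (Fin k) (ZMod 2)}
    (hp : p ∈ flagIdeal k m) : vandermondeCoeff (ZMod 2) k (m + k - 1) p = 0 := by
  refine coeff_eq_zero_of_mem_span_X_pow (mul_det_vandermonde_mem_span_X_pow hp) fun j => ?_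
  have := j.isLt
  simp only [Finsupp.indicator_apply, Finset.mem_univ, dite_true]
  omega

/-- The functional on `R(k,m)` induced by `vandermondeCoeff`: evaluation of a mod-2 cohomology class
of the flag manifold `F(1^k, m)` on the fundamental class. -/
noncomputable def flagIntegral (k m : ℕ) : FlagRing k m →ₗ[ZMod 2] ZMod 2 :=
  ((flagIdeal k m).restrictScalars (ZMod 2)).liftQ (vandermondeCoeff (ZMod 2) k (m + k - 1))
    fun _ hp => vandermondeCoeff_eq_zero_of_mem_flagIdeal hp

lemma flagIntegral_mk {k m : ℕ} (p : MvPolynomial (Fin k) (ZMod 2)) :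
    flagIntegral k m (Ideal.Quotient.mk (flagIdeal k m) p) =
      vandermondeCoeff (ZMod 2) k (m + k - 1) p :=
  rfl

lemma flagIntegral_prod_xGen_pow {k m : ℕ} {b : Fin k → ℕ}
    (hb : b ≤ fun j : Fin k => m + k - 1 - j.val) :
    flagIntegral k m (∏ j, xGen k m j ^ b j) =
      if b = fun j : Fin k => m + k - 1 - j.val then 1 else 0 := by
  simp only [xGen, ← map_pow, ← map_prod, flagIntegral_mk]
  have hb' (j : Fin k) : b j + j ≤ m + k - 1 := by
    have : b j ≤ m + k - 1 - j := hb j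
    have := j.isLt
    omega
  rw [vandermondeCoeff_prod_X_pow hb']
  refine if_congr (Iff.trans (forall_congr' fun j => ?_) _root_.funext_iff.symm) rfl rfl
  have := j.isLt
  omega

end FlagRing

lemma map_prod_algebraMap_add_pow_eq_one {ι A S : Type*} [Fintype ι] [CommSemiring A]
    [CommSemiring S] [Algebra A S] {Φ : S →ₗ[A] A} {y : ι → S} {e : ι → ℕ}
    (hΦ : ∀ b ≤ e, Φ (∏ j, y j ^ b j) = if b = e then 1 else 0) (a : ι → A) :
    Φ (∏ j, (algebraMap A S (a j) + y j) ^ e j) = 1 := by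
  classical
  have expansion : ∏ j, (algebraMap A S (a j) + y j) ^ e j =
      ∑ t ∈ Fintype.piFinset fun j => Finset.range (e j + 1),
        (∏ j, a j ^ t j * ((e j).choose (t j) : A)) • ∏ j, y j ^ (e - t) j := by
    simp only [add_pow, Finset.prod_univ_sum, Algebra.smul_def, map_prod, map_mul, map_pow,
      map_natCast, ← Finset.prod_mul_distrib, Pi.sub_apply, mul_right_comm]
  rw [expansion, map_sum, Finset.sum_eq_single 0]
  · simp [hΦ e le_rfl]
  · intro t ht ht0
    have ht_le : t ≤ e := fun j =>
      Nat.lt_succ_iff.1 (Finset.mem_range.1 (Fintype.mem_piFinset.1 ht j))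
    have sub_ne : e - t ≠ e := fun h => ht0 <| by
      rw [← tsub_tsub_cancel_of_le ht_le, h, tsub_self]
    rw [map_smul, hΦ _ tsub_le_self, if_neg sub_ne, smul_zero]
  · exact fun h => absurd (Fintype.mem_piFinset.2 fun j => by simp) h

lemma tmul_one_mul_prod_ne_zero {ι K A B : Type*} [Fintype ι] [CommSemiring K]
    [CommSemiring A] [Algebra K A] [CommSemiring B] [Algebra K B]
    {φ : B →ₗ[K] K} {x : ι → B} {e : ι → ℕ}
    (hφ : ∀ b ≤ e, φ (∏ j, x j ^ b j) = if b = e then 1 else 0) (a : ι → A) {z : A} (hz : z ≠ 0) :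
    (z ⊗ₜ[K] (1 : B)) * ∏ j, (a j ⊗ₜ[K] (1 : B) + (1 : A) ⊗ₜ[K] x j) ^ e j ≠ 0 := by
  let Φ : A ⊗[K] B →ₗ[A] A :=
    (TensorProduct.AlgebraTensorModule.rid K A A).toLinearMap ∘ₗ φ.baseChange A
  have Φ_monomial : ∀ b ≤ e,
      Φ (∏ j, ((1 : A) ⊗ₜ[K] x j) ^ b j) = if b = e then 1 else 0 := by
    intro b hb
    have prod_tmul : ∏ j, ((1 : A) ⊗ₜ[K] x j) ^ b j = (1 : A) ⊗ₜ[K] ∏ j, x j ^ b j := by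
      simp only [← Algebra.TensorProduct.includeRight_apply (R := K), map_prod, map_pow]
    rw [prod_tmul]
    simp [Φ, hφ b hb]
  have Φ_prod : Φ (∏ j, (a j ⊗ₜ[K] (1 : B) + (1 : A) ⊗ₜ[K] x j) ^ e j) = 1 :=
    map_prod_algebraMap_add_pow_eq_one Φ_monomial a
  intro h
  have smul_prod_eq_zero : z • ∏ j, (a j ⊗ₜ[K] (1 : B) + (1 : A) ⊗ₜ[K] x j) ^ e j = 0 := by
    rwa [Algebra.smul_def]
  apply hz
  simpa [Φ_prod] using congrArg Φ smul_prod_eq_zero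

theorem statement15_general {A : Type*} [CommRing A] [Algebra (ZMod 2) A] (k m : ℕ) (a : Fin k → A)
    {z : A} (hz : z ≠ 0) :
    (z ⊗ₜ[ZMod 2] (1 : FlagRing k m)) *
      ∏ j : Fin k, (a j ⊗ₜ[ZMod 2] (1 : FlagRing k m) + (1 : A) ⊗ₜ[ZMod 2] xGen k m j) ^
        (m + k - 1 - j.val) ≠ 0 :=
  tmul_one_mul_prod_ne_zero (fun _ => flagIntegral_prod_xGen_pow) a hz

/-- if `z ≠ 0` in `R(k,m)^{⊗s}`, then
`(z ⊗ 1) · z_{s+1,1}^{m+k-1} z_{s+1,2}^{m+k-2} ⋯ z_{s+1,k}^m ≠ 0` in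
`R(k,m)^{⊗(s+1)}`, the latter realized as `R(k,m)^{⊗s} ⊗ R(k,m)` with the natural
inclusion `z ↦ z ⊗ 1` and `z_{s+1,j} = x_{1,j} ⊗ 1 + 1 ⊗ x_j`. -/
theorem statement15 (k m s : ℕ) (hk : 0 < k) (hm : 0 < m) (hs : 2 ≤ s)
    (z : ⨂[ZMod 2] _ : Fin s, FlagRing k m) (hz : z ≠ 0) :
    (z ⊗ₜ[ZMod 2] (1 : FlagRing k m)) *
      ∏ j : Fin k,
        (xT k m s ⟨0, by omega⟩ j ⊗ₜ[ZMod 2] (1 : FlagRing k m) +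
            (1 : ⨂[ZMod 2] _ : Fin s, FlagRing k m) ⊗ₜ[ZMod 2] xGen k m j) ^
          (m + k - 1 - j.val) ≠ 0 :=
  statement15_general k m (xT k m s ⟨0, by omega⟩) hz
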